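/- arXiv:1301.0656 — 7 statements merged into one kernel-verified Lean document; each statement's English description precedes it below -/
import Mathlib

section
/- Let n ≥ 1 be an integer and let α, β, k be integers with 0 ≤ α, β ≤ n−1. Suppose α > β and α + β ≥ n, and set γ = α + β − n + 1. Then N_{(α,β)}^k = γ+1 for 0 ≤ k ≤ γ; N_{(α,β)}^k = k+1 for γ ≤ k ≤ β; N_{(α,β)}^k = β+1 for β ≤ k ≤ α; and N_{(α,β)}^k = α+β+1−k for α ≤ k ≤ n−1. -/
/-- `Ncard n α β k` is the cardinality of
`{(x,y) ∈ ℤ×ℤ : 0 ≤ x ≤ α, 0 ≤ y ≤ β, x + y ≡ k (mod n)}`. -/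
noncomputable def Ncard (n α β k : ℤ) : ℕ :=
  Set.ncard {p : ℤ × ℤ | 0 ≤ p.1 ∧ p.1 ≤ α ∧ 0 ≤ p.2 ∧ p.2 ≤ β ∧ p.1 + p.2 ≡ k [ZMOD n]}

theorem Ncard_formula (n α β k : ℤ) (hα0 : 0 ≤ α) (hα : α ≤ n - 1) (hβ : β ≤ n - 1)
    (hk0 : 0 ≤ k) (hk : k ≤ n - 1) :
    Ncard n α β k = (min β k + 1 - max 0 (k - α)).toNat + (β + 1 - (k + n - α)).toNat := by
  have hset : {p : ℤ × ℤ | 0 ≤ p.1 ∧ p.1 ≤ α ∧ 0 ≤ p.2 ∧ p.2 ≤ β ∧ p.1 + p.2 ≡ k [ZMOD n]}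
      = (fun y : ℤ => ((if y ≤ k then k - y else k + n - y, y) : ℤ × ℤ)) ''
        (↑(Finset.Icc (max 0 (k - α)) (min β k) ∪ Finset.Icc (k + n - α) β) : Set ℤ) := by
    ext ⟨x, y⟩
    simp only [Set.mem_ofPred_eq, Set.mem_image, Finset.mem_coe, Finset.mem_union,
      Finset.mem_Icc, Prod.mk.injEq]
    constructor
    · rintro ⟨h1, h2, h3, h4, h5⟩
      obtain ⟨c, hc⟩ := h5.dvd
      have hc1 : -2 < c := by
        by_contra h
        nlinarith
      have hc2 : c < 1 := by
        by_contra h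
        nlinarith
      have hc3 : c = -1 ∨ c = 0 := by omega
      refine ⟨y, ?_, ?_, rfl⟩
      · rcases hc3 with rfl | rfl <;> omega
      · rcases hc3 with rfl | rfl <;> split_ifs <;> omega
    · rintro ⟨z, hz, hx, rfl⟩
      split_ifs at hx with hzk
      · refine ⟨by omega, by omega, by omega, by omega, ?_⟩
        have : x + z = k := by omega
        rw [this]
      · refine ⟨by omega, by omega, by omega, by omega, ?_⟩
        have : x + z = k + n := by omega
        rw [this]
        simp [Int.ModEq]
  have hinj : Function.Injective
      (fun y : ℤ => ((if y ≤ k then k - y else k + n - y, y) : ℤ × ℤ)) := by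
    intro a b h
    exact (Prod.mk.inj h).2
  unfold Ncard
  rw [hset, Set.ncard_image_of_injective _ hinj, Set.ncard_coe_finset,
    Finset.card_union_of_disjoint, Int.card_Icc, Int.card_Icc]
  rw [Finset.disjoint_left]
  intro a ha hb
  rw [Finset.mem_Icc] at ha hb
  omega

theorem stmt3 (n α β k γ : ℤ) (hn : 1 ≤ n)
    (hα0 : 0 ≤ α) (hα : α ≤ n - 1) (hβ0 : 0 ≤ β) (hβ : β ≤ n - 1)
    (hαβ : β < α) (hsum : n ≤ α + β) (hγ : γ = α + β - n + 1) :
    (0 ≤ k → k ≤ γ → (Ncard n α β k : ℤ) = γ + 1) ∧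
    (γ ≤ k → k ≤ β → (Ncard n α β k : ℤ) = k + 1) ∧
    (β ≤ k → k ≤ α → (Ncard n α β k : ℤ) = β + 1) ∧
    (α ≤ k → k ≤ n - 1 → (Ncard n α β k : ℤ) = α + β + 1 - k) := by
  refine ⟨?_, ?_, ?_, ?_⟩ <;> intro h1 h2 <;>
    rw [Ncard_formula n α β k hα0 hα hβ (by omega) (by omega)] <;> omega
end

section
/- Let n ≥ 1 be an integer, let e, f ≥ 0 be integers, write e' = e mod n and f' = f mod n, and let 0 ≤ i ≤ n−1. Then the cardinality of the set {(k,l) ∈ ℤ×ℤ : 0 ≤ k ≤ e, 0 ≤ l ≤ f, and k + l ≡ i (mod n)} equals (e·f − e'·f')/n + (e + f − e' − f')/n + N_{(e',f')}^i (both displayed fractions are integers). -/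
theorem Ncard_symm (n a b i : ℤ) : Ncard n a b i = Ncard n b a i := by
  unfold Ncard
  rw [← Set.ncard_image_of_injective _ (Prod.swap_injective (α := ℤ) (β := ℤ))]
  congr 1
  ext ⟨x, y⟩
  simp only [Set.mem_image, Set.mem_setOf_eq, Prod.exists, Prod.swap_prod_mk, Prod.mk.injEq]
  constructor
  · rintro ⟨u, v, ⟨h1, h2, h3, h4, h5⟩, rfl, rfl⟩
    exact ⟨h3, h4, h1, h2, by rwa [add_comm]⟩
  · rintro ⟨h1, h2, h3, h4, h5⟩
    exact ⟨y, x, ⟨h3, h4, h1, h2, by rwa [add_comm]⟩, rfl, rfl⟩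

theorem Ncard_step (n a b i : ℤ) (hn : 1 ≤ n) (ha : 0 ≤ a) (hb : 0 ≤ b) :
    (Ncard n (a + n) b i : ℤ) = Ncard n a b i + (b + 1) := by
  have hinj : Function.Injective (fun y : ℤ => ((a + 1 + (i - y - a - 1) % n, y) : ℤ × ℤ)) := by
    intro x y h
    exact (Prod.mk.inj h).2
  have hset : {p : ℤ × ℤ | 0 ≤ p.1 ∧ p.1 ≤ a + n ∧ 0 ≤ p.2 ∧ p.2 ≤ b ∧ p.1 + p.2 ≡ i [ZMOD n]}
      = {p : ℤ × ℤ | 0 ≤ p.1 ∧ p.1 ≤ a ∧ 0 ≤ p.2 ∧ p.2 ≤ b ∧ p.1 + p.2 ≡ i [ZMOD n]} ∪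
        (fun y : ℤ => ((a + 1 + (i - y - a - 1) % n, y) : ℤ × ℤ)) '' (Set.Icc 0 b) := by
    ext ⟨x, y⟩
    simp only [Set.mem_union, Set.mem_image, Set.mem_setOf_eq, Set.mem_Icc, Prod.mk.injEq]
    constructor
    · rintro ⟨h1, h2, h3, h4, h5⟩
      by_cases hx : x ≤ a
      · exact Or.inl ⟨h1, hx, h3, h4, h5⟩
      · refine Or.inr ⟨y, ⟨h3, h4⟩, ?_, rfl⟩
        have h6 : x - a - 1 ≡ i - y - a - 1 [ZMOD n] := by
          have := h5.sub_right (y + a + 1)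
          convert this using 1 <;> ring
        have h7 : (i - y - a - 1) % n = x - a - 1 := by
          rw [← h6.eq]
          exact Int.emod_eq_of_lt (by omega) (by omega)
        omega
    · rintro (⟨h1, h2, h3, h4, h5⟩ | ⟨v, ⟨h3, h4⟩, rfl, rfl⟩)
      · exact ⟨h1, by omega, h3, h4, h5⟩
      · have h1 := Int.emod_nonneg (i - v - a - 1) (show n ≠ 0 by omega)
        have h2 := Int.emod_lt_of_pos (i - v - a - 1) (show 0 < n by omega)
        refine ⟨by omega, by omega, h3, h4, ?_⟩
        have := (Int.mod_modEq (i - v - a - 1) n).add_right (a + 1 + v)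
        convert this using 1 <;> ring
  have hfin : {p : ℤ × ℤ | 0 ≤ p.1 ∧ p.1 ≤ a ∧ 0 ≤ p.2 ∧ p.2 ≤ b ∧
      p.1 + p.2 ≡ i [ZMOD n]}.Finite := by
    refine ((Set.finite_Icc (0 : ℤ) a).prod (Set.finite_Icc (0 : ℤ) b)).subset ?_
    rintro ⟨x, y⟩ ⟨h1, h2, h3, h4, -⟩
    exact ⟨⟨h1, h2⟩, ⟨h3, h4⟩⟩
  unfold Ncard
  rw [hset, Set.ncard_union_eq _ hfin ((Set.finite_Icc _ _).image _),
    Set.ncard_image_of_injective _ hinj, ← Finset.coe_Icc, Set.ncard_coe_finset, Int.card_Icc]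
  · push_cast
    omega
  · rw [Set.disjoint_left]
    rintro ⟨x, y⟩ ⟨-, h2, -⟩ ⟨v, -, hv⟩
    have h1 := Int.emod_nonneg (i - v - a - 1) (show n ≠ 0 by omega)
    have := (Prod.mk.inj hv).1
    simp only at h2
    omega

theorem Ncard_steps (n a b i : ℤ) (hn : 1 ≤ n) (ha : 0 ≤ a) (hb : 0 ≤ b) (q : ℕ) :
    (Ncard n (a + q * n) b i : ℤ) = Ncard n a b i + q * (b + 1) := by
  induction q with
  | zero => simp
  | succ q ih =>
    have h : a + ((q + 1 : ℕ) : ℤ) * n = (a + q * n) + n := by push_cast; ring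
    rw [h, Ncard_step n _ b i hn (by positivity) hb, ih]
    push_cast
    ring

theorem stmt4 (n e f e' f' i : ℤ) (hn : 1 ≤ n)
    (he : 0 ≤ e) (hf : 0 ≤ f) (he' : e' = e % n) (hf' : f' = f % n)
    (hi0 : 0 ≤ i) (hi : i ≤ n - 1) :
    n ∣ (e * f - e' * f') ∧ n ∣ (e + f - e' - f') ∧
      (Ncard n e f i : ℤ) =
        (e * f - e' * f') / n + (e + f - e' - f') / n + (Ncard n e' f' i : ℤ) := by
  have hn0 : n ≠ 0 := by omega
  have e0 : 0 ≤ e' := he' ▸ Int.emod_nonneg e hn0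
  have f0 : 0 ≤ f' := hf' ▸ Int.emod_nonneg f hn0
  obtain ⟨q, hq⟩ := Int.eq_ofNat_of_zero_le (Int.ediv_nonneg he (by omega : 0 ≤ n))
  obtain ⟨r, hr⟩ := Int.eq_ofNat_of_zero_le (Int.ediv_nonneg hf (by omega : 0 ≤ n))
  have E : e = e' + q * n := by
    rw [he', ← hq, mul_comm]; exact (Int.emod_add_mul_ediv e n).symm
  have F : f = f' + r * n := by
    rw [hf', ← hr, mul_comm]; exact (Int.emod_add_mul_ediv f n).symm
  have h1 : e * f - e' * f' = n * (q * f + r * e') := by rw [E, F]; ring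
  have h2 : e + f - e' - f' = n * (q + r) := by rw [E, F]; ring
  refine ⟨⟨_, h1⟩, ⟨_, h2⟩, ?_⟩
  rw [h1, h2, Int.mul_ediv_cancel_left _ hn0, Int.mul_ediv_cancel_left _ hn0]
  have h3 := Ncard_steps n e' f i hn e0 hf q
  have h4 := Ncard_steps n f' e' i hn f0 e0 r
  rw [← E] at h3
  rw [← F, Ncard_symm n f e', Ncard_symm n f' e'] at h4
  rw [h3, h4]
  ring
end

section
/- Let n ≥ 2, let 𝕢 ∈ ℂ be a primitive n-th root of unity, let 0 ≤ s ≤ n−1 be an integer, and let q ∈ ℂ satisfy q^n = 𝕢^s. Let d be the multiplicative order of q and let e, f be integers with 0 ≤ e ≤ f ≤ d−1. Let V be the complex vector space with basis {v_x ⊗ v_y : 0 ≤ x ≤ e, 0 ≤ y ≤ f}, and let T : V → V be the linear map defined by T(v_x ⊗ v_y) = 𝕢^{−sy} q^{−y} · v_{x+1} ⊗ v_y + c(x,y) · v_x ⊗ v_{y+1}, where the first summand is omitted when x = e and the second is omitted when y = f, and where c(x,y) = 𝕢^{sx} if y ≡ n−1 (mod n) and c(x,y) = 1 otherwise. For 0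 ≤ i ≤ n−1 let V_i be the span of {v_x ⊗ v_y : x + y ≡ i (mod n)} and let V'_i = (ker T) ∩ V_i. Then dim V'_i equals the cardinality of the set {j ∈ ℤ : f−e ≤ j ≤ f and e + j ≡ i (mod n)}. -/
/-- Coefficients of kernel vectors, by distance `k` from the top row. -/
noncomputable def kerW (p : ℕ → ℂ) (c : ℕ → ℕ → ℂ) (f : ℕ) (u : ℕ → ℂ) : ℕ → ℕ → ℂ
  | 0, x => u x
  | _ + 1, 0 => 0
  | k + 1, x + 1 => -(p (f - k)) / c (x + 1) (f - (k + 1)) * kerW p c f u k x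

theorem kerW_zero (p : ℕ → ℂ) (c : ℕ → ℕ → ℂ) (f : ℕ) (u : ℕ → ℂ) (k x : ℕ) (h : x < k) :
    kerW p c f u k x = 0 := by
  induction k generalizing x with
  | zero => omega
  | succ k ih =>
    cases x with
    | zero => simp [kerW]
    | succ x => simp [kerW, ih x (by omega)]

theorem kerW_supp (p : ℕ → ℂ) (c : ℕ → ℕ → ℂ) (f : ℕ) (u : ℕ → ℂ) (P : ℕ → Prop)
    (hu : ∀ x, ¬ P (x + f) → u x = 0) (k x : ℕ) (hk : k ≤ f) (h : ¬ P (x + (f - k))) :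
    kerW p c f u k x = 0 := by
  induction k generalizing x with
  | zero => exact hu x h
  | succ k ih =>
    cases x with
    | zero => simp [kerW]
    | succ x =>
      have : kerW p c f u k x = 0 := by
        apply ih x (by omega)
        rwa [show x + (f - k) = x + 1 + (f - (k + 1)) by omega]
      simp [kerW, this]

theorem T_apply (e f : ℕ) (p : ℕ → ℂ) (c : ℕ → ℕ → ℂ)
    (T : ((Fin (e + 1) × Fin (f + 1)) → ℂ) →ₗ[ℂ] ((Fin (e + 1) × Fin (f + 1)) → ℂ))
    (hT : ∀ (x : Fin (e + 1)) (y : Fin (f + 1)),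
      T (Pi.single (x, y) 1) =
        (if hx : (x : ℕ) < e then
          p y • (Pi.single ((⟨(x : ℕ) + 1, by omega⟩ : Fin (e + 1)), y) (1 : ℂ) :
              (Fin (e + 1) × Fin (f + 1)) → ℂ)
        else 0) +
        (if hy : (y : ℕ) < f then
          c x y • (Pi.single (x, (⟨(y : ℕ) + 1, by omega⟩ : Fin (f + 1))) (1 : ℂ) :
              (Fin (e + 1) × Fin (f + 1)) → ℂ)
        else 0)) (v : (Fin (e + 1) × Fin (f + 1)) → ℂ) (a : Fin (e + 1)) (b : Fin (f + 1)) :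
    T v (a, b) = (if 0 < (a : ℕ) then p b * v (⟨(a : ℕ) - 1, by omega⟩, b) else 0) +
      (if 0 < (b : ℕ) then c a ((b : ℕ) - 1) * v (a, ⟨(b : ℕ) - 1, by omega⟩) else 0) := by
  let L : ((Fin (e + 1) × Fin (f + 1)) → ℂ) →ₗ[ℂ] ℂ :=
    { toFun := fun v => (if 0 < (a : ℕ) then p b * v (⟨(a : ℕ) - 1, by omega⟩, b) else 0) +
      (if 0 < (b : ℕ) then c a ((b : ℕ) - 1) * v (a, ⟨(b : ℕ) - 1, by omega⟩) else 0)
      map_add' := by intro v w; simp only [Pi.add_apply]; split_ifs <;> ring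
      map_smul' := by
        intro r v
        simp only [Pi.smul_apply, smul_eq_mul, RingHom.id_apply]
        split_ifs <;> ring }
  have key : (LinearMap.proj (a, b)).comp T = L := by
    apply (Pi.basisFun ℂ (Fin (e + 1) × Fin (f + 1))).ext
    rintro ⟨x, y⟩
    simp only [Pi.basisFun_apply, LinearMap.comp_apply, hT, LinearMap.proj_apply]
    change _ = (if 0 < (a : ℕ) then p b * (Pi.single (x, y) (1 : ℂ) :
        (Fin (e + 1) × Fin (f + 1)) → ℂ) (⟨(a : ℕ) - 1, by omega⟩, b) else 0) +
      (if 0 < (b : ℕ) then c a ((b : ℕ) - 1) * (Pi.single (x, y) (1 : ℂ) :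
        (Fin (e + 1) × Fin (f + 1)) → ℂ) (a, ⟨(b : ℕ) - 1, by omega⟩) else 0)
    rw [Pi.add_apply]
    obtain ⟨a, ha⟩ := a
    obtain ⟨b, hb⟩ := b
    obtain ⟨x, hx⟩ := x
    obtain ⟨y, hy⟩ := y
    simp only
    congr 1
    · by_cases h : a = x + 1 ∧ b = y
      · obtain ⟨rfl, rfl⟩ := h
        have : x < e := by omega
        simp [this]
      · have h1 : (if hx : x < e then
          p y • (Pi.single ((⟨x + 1, by omega⟩ : Fin (e + 1)), ⟨y, hy⟩) (1 : ℂ) :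
              (Fin (e + 1) × Fin (f + 1)) → ℂ) else 0) (⟨a, ha⟩, ⟨b, hb⟩) = 0 := by
          split_ifs
          · simp [Pi.single_apply, h]
          · rfl
        rw [h1]
        split_ifs
        · have h2 : ¬ (a - 1 = x ∧ b = y) := by omega
          simp [Pi.single_apply, h2]
        · rfl
    · by_cases h : a = x ∧ b = y + 1
      · obtain ⟨rfl, rfl⟩ := h
        have : y < f := by omega
        simp [this]
      · have h1 : (if hy : y < f then
          c x y • (Pi.single ((⟨x, hx⟩ : Fin (e + 1)), ⟨y + 1, by omega⟩) (1 : ℂ) :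
              (Fin (e + 1) × Fin (f + 1)) → ℂ) else 0) (⟨a, ha⟩, ⟨b, hb⟩) = 0 := by
          split_ifs
          · simp [Pi.single_apply, h]
          · rfl
        rw [h1]
        split_ifs
        · have h2 : ¬ (a = x ∧ b - 1 = y) := by omega
          simp [Pi.single_apply, h2]
        · rfl
  exact LinearMap.congr_fun key v

theorem mem_Vi (e f : ℕ) (P : ℕ → Prop) (v : (Fin (e + 1) × Fin (f + 1)) → ℂ) :
    v ∈ Submodule.span ℂ {v : (Fin (e + 1) × Fin (f + 1)) → ℂ |
      ∃ (x : Fin (e + 1)) (y : Fin (f + 1)),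
        P ((x : ℕ) + (y : ℕ)) ∧ v = Pi.single (x, y) (1 : ℂ)} ↔
    ∀ (x : Fin (e + 1)) (y : Fin (f + 1)), ¬ P ((x : ℕ) + (y : ℕ)) → v (x, y) = 0 := by
  constructor
  · intro h
    induction h using Submodule.span_induction with
    | mem w hw =>
      obtain ⟨x, y, hP, rfl⟩ := hw
      intro a b hab
      rw [Pi.single_apply, if_neg]
      intro h
      cases h
      exact hab hP
    | zero => intros; rfl
    | add u w _ _ hu hw => intro x y h; simp [hu x y h, hw x y h]
    | smul r w _ hw => intro x y h; simp [hw x y h]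
  · intro h
    rw [← (Pi.basisFun ℂ (Fin (e + 1) × Fin (f + 1))).sum_repr v]
    apply Submodule.sum_mem
    rintro ⟨x, y⟩ -
    simp only [Pi.basisFun_repr, Pi.basisFun_apply]
    by_cases hP : P ((x : ℕ) + (y : ℕ))
    · exact Submodule.smul_mem _ _ (Submodule.subset_span ⟨x, y, hP, rfl⟩)
    · rw [h x y hP, zero_smul]; exact Submodule.zero_mem _

theorem main_finrank (e f : ℕ) (hef : e ≤ f) (p : ℕ → ℂ) (c : ℕ → ℕ → ℂ)
    (hc : ∀ x y, c x y ≠ 0) (P : ℕ → Prop) [DecidablePred P]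
    (K : Submodule ℂ ((Fin (e + 1) × Fin (f + 1)) → ℂ))
    (hK : ∀ v, v ∈ K ↔ ((∀ (a : Fin (e + 1)) (b : Fin (f + 1)),
      (if 0 < (a : ℕ) then p b * v (⟨(a : ℕ) - 1, by omega⟩, b) else 0) +
      (if 0 < (b : ℕ) then c a ((b : ℕ) - 1) * v (a, ⟨(b : ℕ) - 1, by omega⟩) else 0) = 0) ∧
      ∀ (x : Fin (e + 1)) (y : Fin (f + 1)), ¬ P ((x : ℕ) + (y : ℕ)) → v (x, y) = 0)) :
    Module.finrank ℂ K = Fintype.card {x : Fin (e + 1) // P ((x : ℕ) + f)} := by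
  let Φ : K →ₗ[ℂ] ({x : Fin (e + 1) // P ((x : ℕ) + f)} → ℂ) :=
    { toFun := fun v x => v.1 (x.1, Fin.last f)
      map_add' := by intros; rfl
      map_smul' := by intros; rfl }
  have hinj : Function.Injective Φ := by
    rw [injective_iff_map_eq_zero]
    rintro ⟨v, hv⟩ h0
    obtain ⟨h1, h2⟩ := (hK v).1 hv
    have h3 : ∀ k, ∀ (x : Fin (e + 1)) (y : Fin (f + 1)), (y : ℕ) + k = f → v (x, y) = 0 := by
      intro k
      induction k with
      | zero =>
        intro x y hy
        have hy' : y = Fin.last f := Fin.ext (by simpa using hy)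
        subst hy'
        by_cases hP : P ((x : ℕ) + f)
        · exact congrFun h0 ⟨x, hP⟩
        · exact h2 x _ hP
      | succ k ih =>
        intro x y hy
        have h4 := h1 x ⟨(y : ℕ) + 1, by omega⟩
        have h5 : (if 0 < (x : ℕ) then p ((y : ℕ) + 1) *
            v (⟨(x : ℕ) - 1, by omega⟩, ⟨(y : ℕ) + 1, by omega⟩) else 0) = 0 := by
          split_ifs
          · rw [ih _ _ (by simp only; omega), mul_zero]
          · rfl
        simp only [h5, zero_add, Nat.succ_pos, if_true, Nat.add_sub_cancel, Fin.eta] at h4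
        exact (mul_eq_zero.1 h4).resolve_left (hc _ _)
    ext ⟨x, y⟩
    exact h3 (f - y) x y (by omega)
  have hsurj : Function.Surjective Φ := by
    intro u
    let u' : ℕ → ℂ := fun x => if h : x < e + 1 then
      (if h' : P (x + f) then u ⟨⟨x, h⟩, h'⟩ else 0) else 0
    have hu' : ∀ x, ¬ P (x + f) → u' x = 0 := by
      intro x hx
      simp [u', hx]
    refine ⟨⟨fun z => kerW p c f u' (f - z.2) z.1, (hK _).2 ⟨?_, ?_⟩⟩, ?_⟩
    · rintro ⟨a, ha⟩ ⟨b, hb⟩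
      simp only
      rcases Nat.eq_zero_or_pos b with rfl | hb0
      · simp only [lt_irrefl, if_false, add_zero]
        split_ifs
        · rw [kerW_zero _ _ _ _ _ _ (by omega), mul_zero]
        · rfl
      · obtain ⟨k, rfl⟩ : ∃ k, b = f - k := ⟨f - b, by omega⟩
        rw [if_pos hb0]
        have e1 : f - (f - k) = min f k := by omega
        have hk : k < f := by omega
        rw [show f - (f - k) = k by omega, show f - (f - k - 1) = k + 1 by omega]
        cases a with
        | zero => simp [kerW]
        | succ a =>
          have := hc (a + 1) (f - (k + 1))
          simp only [kerW, Nat.succ_pos, if_true, Nat.add_sub_cancel]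
          rw [show f - k - 1 = f - (k + 1) by omega]
          field_simp
          ring
    · intro x y h
      apply kerW_supp p c f u' P hu' _ _ (by omega)
      rwa [show f - (f - (y : ℕ)) = y by omega]
    · funext ⟨x, hx⟩
      change kerW p c f u' (f - (Fin.last f : ℕ)) x = _
      simp [kerW, u', hx]
      omega
  rw [(LinearEquiv.ofBijective Φ ⟨hinj, hsurj⟩).finrank_eq, Module.finrank_fintype_fun_eq_card]


/-- Proposition 3.6: the dimension of `V'_i = (ker T) ∩ V_i` for
`V = V(0,e) ⊗ V(0,f)` equals `#{j : f-e ≤ j ≤ f, e + j ≡ i (mod n)}`.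
Here `V` is realized as the complex vector space with basis
`{v_x ⊗ v_y : 0 ≤ x ≤ e, 0 ≤ y ≤ f}`, i.e. `(Fin (e+1) × Fin (f+1)) → ℂ`
with standard basis `Pi.single (x,y) 1`. -/
theorem stmt7 (n : ℕ) (hn : 2 ≤ n) (𝕢 : ℂ) (h𝕢 : IsPrimitiveRoot 𝕢 n)
    (s : ℕ) (hs : s ≤ n - 1) (q : ℂ) (hq : q ^ n = 𝕢 ^ s)
    (d : ℕ) (hd : d = orderOf q)
    (e f : ℕ) (hef : e ≤ f) (hf : (f : ℤ) ≤ (d : ℤ) - 1)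
    (T : ((Fin (e + 1) × Fin (f + 1)) → ℂ) →ₗ[ℂ] ((Fin (e + 1) × Fin (f + 1)) → ℂ))
    (hT : ∀ (x : Fin (e + 1)) (y : Fin (f + 1)),
      T (Pi.single (x, y) 1) =
        (if hx : (x : ℕ) < e then
          (𝕢 ^ (-(s * (y : ℕ) : ℤ)) * q ^ (-((y : ℕ) : ℤ))) •
            (Pi.single ((⟨(x : ℕ) + 1, by omega⟩ : Fin (e + 1)), y) (1 : ℂ) :
              (Fin (e + 1) × Fin (f + 1)) → ℂ)
        else 0) +
        (if hy : (y : ℕ) < f then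
          (if (y : ℕ) % n = n - 1 then 𝕢 ^ (s * (x : ℕ)) else 1) •
            (Pi.single (x, (⟨(y : ℕ) + 1, by omega⟩ : Fin (f + 1))) (1 : ℂ) :
              (Fin (e + 1) × Fin (f + 1)) → ℂ)
        else 0))
    (i : ℕ) (hi : i ≤ n - 1)
    (Vi : Submodule ℂ ((Fin (e + 1) × Fin (f + 1)) → ℂ))
    (hVi : Vi = Submodule.span ℂ {v | ∃ (x : Fin (e + 1)) (y : Fin (f + 1)),
        ((x : ℕ) + (y : ℕ)) % n = i ∧ v = Pi.single (x, y) (1 : ℂ)}) :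
    Module.finrank ℂ ↥(LinearMap.ker T ⊓ Vi) =
      Set.ncard {j : ℤ | (f : ℤ) - (e : ℤ) ≤ j ∧ j ≤ (f : ℤ) ∧
        (e : ℤ) + j ≡ (i : ℤ) [ZMOD (n : ℤ)]} := by
  have h𝕢0 : 𝕢 ≠ 0 := h𝕢.ne_zero (by omega)
  have hTa := T_apply e f (fun y => 𝕢 ^ (-(s * (y : ℕ) : ℤ)) * q ^ (-((y : ℕ) : ℤ)))
    (fun x y => if (y : ℕ) % n = n - 1 then 𝕢 ^ (s * (x : ℕ)) else 1) T hT
  rw [main_finrank e f hef (fun y => 𝕢 ^ (-(s * (y : ℕ) : ℤ)) * q ^ (-((y : ℕ) : ℤ)))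
    (fun x y => if (y : ℕ) % n = n - 1 then 𝕢 ^ (s * (x : ℕ)) else 1) ?_ (fun m => m % n = i)
    (LinearMap.ker T ⊓ Vi) ?_]
  · rw [← Nat.card_eq_fintype_card, ← Nat.card_coe_set_eq]
    refine Nat.card_congr (Equiv.ofBijective (fun x => ⟨(x.1 : ℤ) + f - e, ?_⟩) ⟨?_, ?_⟩)
    · obtain ⟨x, hx⟩ := x
      refine ⟨by simp, by simp only; omega, ?_⟩
      simp only at hx ⊢
      rw [show (e : ℤ) + ((x : ℕ) + f - e) = (((x : ℕ) + f : ℕ) : ℤ) by push_cast; ring]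
      rw [Int.natCast_modEq_iff, Nat.ModEq, hx, Nat.mod_eq_of_lt (by omega)]
    · rintro ⟨x, hx⟩ ⟨y, hy⟩ h
      simp only [Subtype.mk.injEq] at h ⊢
      apply Fin.ext
      omega
    · rintro ⟨j, h1, h2, h3⟩
      obtain ⟨x, hx⟩ : ∃ x : ℕ, (x : ℤ) = j + e - f := ⟨(j + e - f).toNat, by omega⟩
      refine ⟨⟨⟨x, by omega⟩, ?_⟩, ?_⟩
      · simp only
        rw [show (e : ℤ) + j = ((x + f : ℕ) : ℤ) by push_cast; omega,
          Int.natCast_modEq_iff, Nat.ModEq, Nat.mod_eq_of_lt (show i < n by omega)] at h3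
        exact h3
      · simp only [Subtype.mk.injEq]
        omega
  · intro x y
    split_ifs
    · exact pow_ne_zero _ h𝕢0
    · exact one_ne_zero
  · intro v
    rw [Submodule.mem_inf, hVi, mem_Vi e f (fun m => m % n = i), LinearMap.mem_ker]
    refine and_congr_left fun _ => ?_
    constructor
    · intro h a b
      rw [← hTa v a b, h]; rfl
    · intro h
      funext ⟨a, b⟩
      rw [hTa v a b, h]; rfl
end

section
/- Let n ≥ 1 be an integer and let e, f be integers with 0 ≤ e ≤ f. Write e = αn + e' with 0 ≤ e' ≤ n−1. For an integer j with 0 ≤ j ≤ n−1, set C_j = #{(k,l) ∈ ℤ×ℤ : 0 ≤ k ≤ e, 0 ≤ l ≤ f, k + l ≡ j (mod n)} and K_j = #{m ∈ ℤ : f−e ≤ m ≤ f, e + m ≡ j (mod n)}. For 0 ≤ i ≤ n−1 define S_i = C_i − C_{(i−1) mod n} + K_{(i−1) mod n}. Then S_i = α + 1 for 0 ≤ i ≤ e', and S_i = α for e' + 1 ≤ i ≤ n−1. -/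
theorem aux_card (n e i c : ℤ) (hn : 1 ≤ n) (hc : -1 ≤ c) (hi0 : 0 ≤ i) (hin : i ≤ n - 1)
    (h1 : i + n * c ≤ e) (h2 : e < i + n * (c + 1)) :
    (Set.ncard {k : ℤ | 0 ≤ k ∧ k ≤ e ∧ k ≡ i [ZMOD n]} : ℤ) = c + 1 := by
  have : {k : ℤ | 0 ≤ k ∧ k ≤ e ∧ k ≡ i [ZMOD n]}
      = Set.image (fun t : ℤ => i + n * t) (Finset.Icc (0 : ℤ) c : Set ℤ) := by
    ext k
    simp only [Set.mem_ofPred_eq, Set.mem_image, Finset.coe_Icc, Set.mem_Icc]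
    constructor
    · rintro ⟨a, b, h⟩
      obtain ⟨t, ht⟩ := h.symm.dvd
      refine ⟨t, ⟨?_, ?_⟩, by linarith⟩
      · by_contra hh
        have : t ≤ -1 := by omega
        nlinarith
      · by_contra hh
        have : c + 1 ≤ t := by omega
        nlinarith
    · rintro ⟨t, ⟨a, b⟩, rfl⟩
      refine ⟨by positivity, by nlinarith, ?_⟩
      exact (Int.modEq_iff_dvd.2 ⟨t, by ring⟩).symm
  rw [this, Set.ncard_image_of_injective, Set.ncard_coe_finset, Int.card_Icc]
  · omega
  · intro a b h
    have h' : n * a = n * b := by simpa using h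
    exact mul_left_cancel₀ (by omega) h'

theorem aux_fin (a b c d : ℤ) (s : Set (ℤ × ℤ))
    (h : ∀ p ∈ s, a ≤ p.1 ∧ p.1 ≤ b ∧ c ≤ p.2 ∧ p.2 ≤ d) : s.Finite := by
  refine ((Set.finite_Icc a b).prod (Set.finite_Icc c d)).subset ?_
  intro p hp
  obtain ⟨h1, h2, h3, h4⟩ := h p hp
  exact ⟨⟨h1, h2⟩, ⟨h3, h4⟩⟩

theorem aux_union (s t : Set (ℤ × ℤ)) (h : Disjoint s t) (hs : s.Finite) (ht : t.Finite) :
    (s ∪ t).ncard = s.ncard + t.ncard := Set.ncard_union_eq h hs ht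

theorem aux_main (n e f i j : ℤ) (hf : 0 ≤ f) (hj : j ≡ i - 1 [ZMOD n]) :
    Ncard n e f i + Set.ncard {m : ℤ | f - e ≤ m ∧ m ≤ f ∧ e + m ≡ j [ZMOD n]}
      = Ncard n e f j + Set.ncard {k : ℤ | 0 ≤ k ∧ k ≤ e ∧ k ≡ i [ZMOD n]} := by
  have key : ∀ x y : ℤ, y = x - 1 → (y ≡ j [ZMOD n] ↔ x ≡ i [ZMOD n]) := by
    rintro x y rfl
    constructor
    · intro h
      simpa using (h.trans hj).add_right 1
    · intro h
      exact (h.sub_right 1).trans hj.symm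
  have hK : Set.ncard {m : ℤ | f - e ≤ m ∧ m ≤ f ∧ e + m ≡ j [ZMOD n]}
      = Set.ncard (Set.image (fun m : ℤ => ((m - f + e, f + 1) : ℤ × ℤ))
        {m : ℤ | f - e ≤ m ∧ m ≤ f ∧ e + m ≡ j [ZMOD n]}) := by
    rw [Set.ncard_image_of_injective]
    intro a b h
    simpa using h
  have hA : Set.ncard {k : ℤ | 0 ≤ k ∧ k ≤ e ∧ k ≡ i [ZMOD n]}
      = Set.ncard (Set.image (fun k : ℤ => ((k, 0) : ℤ × ℤ))
        {k : ℤ | 0 ≤ k ∧ k ≤ e ∧ k ≡ i [ZMOD n]}) := by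
    rw [Set.ncard_image_of_injective]
    intro a b h
    simpa using h
  have hC : Ncard n e f j = Set.ncard (Set.image (fun p : ℤ × ℤ => ((p.1, p.2 + 1) : ℤ × ℤ))
      {p : ℤ × ℤ | 0 ≤ p.1 ∧ p.1 ≤ e ∧ 0 ≤ p.2 ∧ p.2 ≤ f ∧ p.1 + p.2 ≡ j [ZMOD n]}) := by
    rw [Set.ncard_image_of_injective]
    · rfl
    · rintro ⟨a, a'⟩ ⟨b, b'⟩ h
      simpa using h
  rw [hK, hA, hC, Ncard, ← aux_union, ← aux_union]
  · congr 1
    ext ⟨x, y⟩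
    simp only [Set.mem_union, Set.mem_image, Set.mem_ofPred_eq, Prod.mk.injEq, Prod.exists]
    trans (0 ≤ x ∧ x ≤ e ∧ 0 ≤ y ∧ y ≤ f + 1 ∧ x + y ≡ i [ZMOD n])
    · constructor
      · rintro (⟨a, b, c, d, h⟩ | ⟨m, ⟨a, b, h⟩, rfl, rfl⟩)
        · exact ⟨a, b, c, by omega, h⟩
        · exact ⟨by omega, by omega, by omega, le_rfl, (key _ _ (by ring)).1 h⟩
      · rintro ⟨a, b, c, d, h⟩
        by_cases hy : y ≤ f
        · exact Or.inl ⟨a, b, c, hy, h⟩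
        · obtain rfl : y = f + 1 := by omega
          exact Or.inr ⟨x + f - e, ⟨by omega, by omega, (key _ _ (by ring)).2 h⟩, by ring, rfl⟩
    · constructor
      · rintro ⟨a, b, c, d, h⟩
        by_cases hy : y = 0
        · subst hy
          exact Or.inr ⟨x, ⟨a, b, by simpa using h⟩, rfl, rfl⟩
        · exact Or.inl ⟨x, y - 1, ⟨a, b, by omega, by omega, (key _ _ (by ring)).2 h⟩, rfl, by ring⟩
      · rintro (⟨x', y', ⟨a, b, c, d, h⟩, rfl, rfl⟩ | ⟨m, ⟨a, b, h⟩, rfl, rfl⟩)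
        · exact ⟨a, b, by omega, by omega, (key _ _ (by ring)).1 h⟩
        · exact ⟨a, b, le_rfl, by omega, by simpa using h⟩
  · rw [Set.disjoint_left]
    rintro ⟨x, y⟩ ⟨p, ⟨-, -, h, -⟩, hp⟩ ⟨k, -, hk⟩
    simp only [Prod.mk.injEq] at hp hk
    omega
  · apply aux_fin 0 e 0 (f + 1)
    rintro _ ⟨p, ⟨a, b, c, d, -⟩, rfl⟩
    exact ⟨a, b, by simp only []; omega, by simp only []; omega⟩
  · apply aux_fin 0 e 0 (f + 1)
    rintro _ ⟨p, ⟨a, b, -⟩, rfl⟩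
    exact ⟨a, b, le_rfl, by simp only []; omega⟩
  · rw [Set.disjoint_left]
    rintro ⟨x, y⟩ ⟨-, -, -, h, -⟩ ⟨k, -, hk⟩
    simp only [Prod.mk.injEq] at hk h
    omega
  · apply aux_fin 0 e 0 (f + 1)
    rintro p ⟨a, b, c, d, -⟩
    exact ⟨a, b, c, by omega⟩
  · apply aux_fin 0 e 0 (f + 1)
    rintro _ ⟨p, ⟨a, b, -⟩, rfl⟩
    exact ⟨by simp only []; omega, by simp only []; omega, by simp only []; omega, le_rfl⟩

theorem stmt8 (n e f α e' : ℤ) (hn : 1 ≤ n) (he0 : 0 ≤ e) (hef : e ≤ f)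
    (he : e = α * n + e') (he'0 : 0 ≤ e') (he' : e' ≤ n - 1)
    (C K S : ℤ → ℤ)
    (hC : ∀ j, C j = (Ncard n e f j : ℤ))
    (hK : ∀ j, K j = (Set.ncard {m : ℤ | f - e ≤ m ∧ m ≤ f ∧ e + m ≡ j [ZMOD n]} : ℤ))
    (hS : ∀ i, S i = C i - C ((i - 1) % n) + K ((i - 1) % n)) :
    (∀ i, 0 ≤ i → i ≤ e' → S i = α + 1) ∧
    (∀ i, e' + 1 ≤ i → i ≤ n - 1 → S i = α) := by
  have hα : 0 ≤ α := by
    by_contra hh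
    have : α ≤ -1 := by omega
    nlinarith
  have hSA : ∀ i, S i = (Set.ncard {k : ℤ | 0 ≤ k ∧ k ≤ e ∧ k ≡ i [ZMOD n]} : ℤ) := by
    intro i
    have h := aux_main n e f i ((i - 1) % n) (by omega) (Int.mod_modEq _ _)
    rw [hS, hC, hC, hK]
    omega
  constructor
  · intro i h0 h1
    rw [hSA]
    exact aux_card n e i α hn (by omega) h0 (by omega) (by nlinarith) (by nlinarith)
  · intro i h0 h1
    rw [hSA, aux_card n e i (α - 1) hn (by omega) (by omega) (by omega) (by nlinarith)
      (by nlinarith)]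
    ring
end

section
/- Let n ≥ 1 and d ≥ 1 be integers, let J be the ideal of ℤ[x,y] generated by x^n − 1 and (y − x − 1)·f_d(x,y), and let R = ℤ[x,y]/J. Let e, f be integers with 0 ≤ e ≤ f ≤ d−1 and e + f ≤ d−1. Then in R, the images satisfy f_{e+1}(x,y) · f_{f+1}(x,y) ≡ Σ_{k=0}^{e} x^k · f_{e+f+1−2k}(x,y) (mod J). -/
open MvPolynomial

/-- The generalized Fibonacci polynomials in `ℤ[x,y]` (with `x = X 0`, `y = X 1`):
`f 1 = 1`, `f 2 = y`, and `f i = y * f (i-1) - x * f (i-2)` for `i > 2`. -/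
noncomputable def genFib : ℕ → MvPolynomial (Fin 2) ℤ
  | 0 => 0
  | 1 => 1
  | (m + 2) => X 1 * genFib (m + 1) - X 0 * genFib m

theorem genFib_add (a b : ℕ) :
    genFib (a + 1) * genFib (b + 1) = genFib (a + b + 1) + X 0 * (genFib a * genFib b) := by
  induction a generalizing b with
  | zero => simp [genFib]
  | succ a ih =>
    have h := ih (b + 1)
    have e1 : a + 1 + b + 1 = a + (b + 1) + 1 := by ring
    have h2 : genFib (b + 1 + 1) = X 1 * genFib (b + 1) - X 0 * genFib b := by rw [genFib]
    have h3 : genFib (a + 1 + 1) = X 1 * genFib (a + 1) - X 0 * genFib a := by rw [genFib]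
    rw [e1, h3]
    rw [h2] at h
    linear_combination h

theorem genFib_mul (e f : ℕ) (hef : e ≤ f) :
    genFib (e + 1) * genFib (f + 1) =
      ∑ k ∈ Finset.range (e + 1), X 0 ^ k * genFib (e + f + 1 - 2 * k) := by
  induction e generalizing f with
  | zero => simp [genFib]
  | succ e ih =>
    obtain ⟨g, rfl⟩ : ∃ g, f = g + 1 := ⟨f - 1, by omega⟩
    rw [Finset.sum_range_succ', genFib_add, ih g (by omega), Finset.mul_sum, add_comm]
    congr 1
    · refine Finset.sum_congr rfl fun k _ => ?_
      have : e + 1 + (g + 1) + 1 - 2 * (k + 1) = e + g + 1 - 2 * k := by omega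
      rw [this]
      ring
    · simp

/-- Clebsch-Gordan formula in the Green ring, case `e + f ≤ d - 1`:
`f_{e+1} · f_{f+1} ≡ Σ_{k=0}^{e} x^k · f_{e+f+1-2k} (mod J)`. -/
theorem stmt12 (n d : ℕ) (hn : 1 ≤ n) (hd : 1 ≤ d)
    (J : Ideal (MvPolynomial (Fin 2) ℤ))
    (hJ : J = Ideal.span {X 0 ^ n - 1, (X 1 - X 0 - 1) * genFib d})
    (e f : ℕ) (hef : e ≤ f) (hfd : f + 1 ≤ d) (hsum : e + f + 1 ≤ d) :
    Ideal.Quotient.mk J (genFib (e + 1) * genFib (f + 1)) =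
      Ideal.Quotient.mk J
        (∑ k ∈ Finset.range (e + 1), X 0 ^ k * genFib (e + f + 1 - 2 * k)) := by
  rw [genFib_mul e f hef]
end

section
/- Let n ≥ 1 and d ≥ 1 be integers, let J be the ideal of ℤ[x,y] generated by x^n − 1 and (y − x − 1)·f_d(x,y), and let R = ℤ[x,y]/J. Let e, f be integers with 0 ≤ e ≤ f ≤ d−1 and e + f ≥ d, and set γ = e + f − d + 1. Then in R, the images satisfy f_{e+1}(x,y) · f_{f+1}(x,y) ≡ Σ_{k=0}^{γ} x^k · f_d(x,y) + Σ_{l=γ+1}^{e} x^l · f_{e+f+1−2l}(x,y) (mod J), where the second sum is empty if γ ≥ e. -/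
open MvPolynomial

theorem genFib_step (m : ℕ) : genFib (m + 2) = X 1 * genFib (m + 1) - X 0 * genFib m := by
  rw [genFib]

theorem genFib_add_s13 (m : ℕ) : ∀ k : ℕ, genFib (m + k + 1) =
    genFib (m + 1) * genFib (k + 1) - X 0 * (genFib m * genFib k) := by
  induction m with
  | zero => intro k; simp [genFib]
  | succ m ih =>
    intro k
    have h := ih (k + 1)
    rw [show m + 1 + k + 1 = m + (k + 1) + 1 by ring, h, genFib_step k,
      show m + 1 + 1 = m + 2 by ring, genFib_step m]
    ring

theorem genFib_cg (e : ℕ) : ∀ f : ℕ, e ≤ f → genFib (e + 1) * genFib (f + 1) =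
    ∑ l ∈ Finset.range (e + 1), X 0 ^ l * genFib (e + f + 1 - 2 * l) := by
  induction e with
  | zero => intro f _; simp [genFib]
  | succ e ih =>
    intro f hf
    obtain ⟨g, rfl⟩ : ∃ g, f = g + 1 := ⟨f - 1, by omega⟩
    have h1 := genFib_add_s13 (e + 1) (g + 1)
    rw [ih g (by omega)] at h1
    rw [Finset.sum_range_succ', eq_add_of_sub_eq h1.symm, Finset.mul_sum, add_comm]
    congr 1
    · refine Finset.sum_congr rfl fun l _ => ?_
      rw [show e + 1 + (g + 1) + 1 - 2 * (l + 1) = e + g + 1 - 2 * l by omega]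
      ring
    · simp

theorem genFib_geom (m : ℕ) : ((X 1 - X 0 - 1 : MvPolynomial (Fin 2) ℤ) ∣
      genFib m - ∑ k ∈ Finset.range m, X 0 ^ k) ∧
    ((X 1 - X 0 - 1 : MvPolynomial (Fin 2) ℤ) ∣
      genFib (m + 1) - ∑ k ∈ Finset.range (m + 1), X 0 ^ k) := by
  induction m with
  | zero => simp [genFib]
  | succ m ih =>
    refine ⟨ih.2, ?_⟩
    obtain ⟨⟨a, ha⟩, ⟨b, hb⟩⟩ := ih
    refine ⟨genFib (m + 1) + (1 + X 0) * b - X 0 * a, ?_⟩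
    rw [show m + 1 + 1 = m + 2 by ring, genFib_step]
    rw [Finset.sum_range_succ] at hb
    rw [Finset.sum_range_succ, Finset.sum_range_succ]
    linear_combination (1 + X 0) * hb - X 0 * ha

/-- Clebsch-Gordan formula in the Green ring, case `e + f ≥ d`, `γ = e + f - d + 1`:
`f_{e+1} · f_{f+1} ≡ Σ_{k=0}^{γ} x^k · f_d + Σ_{l=γ+1}^{e} x^l · f_{e+f+1-2l} (mod J)`
(the second sum being empty if `γ ≥ e`). -/
theorem stmt13 (n d : ℕ) (hn : 1 ≤ n) (hd : 1 ≤ d)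
    (J : Ideal (MvPolynomial (Fin 2) ℤ))
    (hJ : J = Ideal.span {X 0 ^ n - 1, (X 1 - X 0 - 1) * genFib d})
    (e f γ : ℕ) (hef : e ≤ f) (hfd : f + 1 ≤ d) (hsum : d ≤ e + f)
    (hγ : γ = e + f + 1 - d) :
    Ideal.Quotient.mk J (genFib (e + 1) * genFib (f + 1)) =
      Ideal.Quotient.mk J
        (∑ k ∈ Finset.range (γ + 1), X 0 ^ k * genFib d +
         ∑ l ∈ Finset.Icc (γ + 1) e, X 0 ^ l * genFib (e + f + 1 - 2 * l)) := by
  have hγe : γ ≤ e := by omega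
  have hsplit : (∑ l ∈ Finset.range (e + 1), X 0 ^ l * genFib (e + f + 1 - 2 * l) :
      MvPolynomial (Fin 2) ℤ) =
      ∑ l ∈ Finset.range (γ + 1), X 0 ^ l * genFib (e + f + 1 - 2 * l) +
      ∑ l ∈ Finset.Icc (γ + 1) e, X 0 ^ l * genFib (e + f + 1 - 2 * l) := by
    rw [← Finset.sum_range_add_sum_Ico _ (show γ + 1 ≤ e + 1 by omega)]
    rfl
  have h2 := genFib_cg γ (d - 1) (by omega)
  rw [show d - 1 + 1 = d by omega, show γ + (d - 1) + 1 = e + f + 1 by omega] at h2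
  rw [genFib_cg e f hef, hsplit, ← h2, Ideal.Quotient.eq]
  obtain ⟨c, hc⟩ := (genFib_geom γ).2
  have h3 : genFib (γ + 1) * genFib d +
      ∑ l ∈ Finset.Icc (γ + 1) e, X 0 ^ l * genFib (e + f + 1 - 2 * l) -
      (∑ k ∈ Finset.range (γ + 1), X 0 ^ k * genFib d +
        ∑ l ∈ Finset.Icc (γ + 1) e, X 0 ^ l * genFib (e + f + 1 - 2 * l)) =
      c * ((X 1 - X 0 - 1) * genFib d) := by
    rw [← Finset.sum_mul]
    linear_combination genFib d * hc
  rw [h3, hJ]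
  exact Ideal.mul_mem_left _ _ (Ideal.subset_span (by simp))
end

section
/- Let n ≥ 1 and d ≥ 1 be integers, let J be the ideal of ℤ[x,y] generated by x^n − 1 and (y − x − 1)·f_d(x,y), and let R = ℤ[x,y]/J. Then for every integer e with 0 ≤ e ≤ d−1, the images satisfy f_{e+1}(x,y) · f_d(x,y) ≡ (Σ_{i=0}^{e} x^i) · f_d(x,y) (mod J). -/
open MvPolynomial

/-- `f_m ≡ 1 + x + ... + x^(m-1)` modulo `y - x - 1`. -/
theorem genFib_dvd (m : ℕ) :
    ((X 1 - X 0 - 1 : MvPolynomial (Fin 2) ℤ) ∣ genFib m - ∑ i ∈ Finset.range m, X 0 ^ i) ∧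
    ((X 1 - X 0 - 1 : MvPolynomial (Fin 2) ℤ) ∣
      genFib (m + 1) - ∑ i ∈ Finset.range (m + 1), X 0 ^ i) := by
  induction m with
  | zero => simp [genFib]
  | succ k ih =>
    refine ⟨ih.2, ?_⟩
    obtain ⟨⟨a, ha⟩, ⟨b, hb⟩⟩ := ih
    refine ⟨X 1 * b - X 0 * a + ∑ i ∈ Finset.range (k + 1), X 0 ^ i, ?_⟩
    rw [genFib, Finset.sum_range_succ _ (k + 1)]
    rw [Finset.sum_range_succ] at hb ⊢
    linear_combination X 1 * hb - X 0 * ha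

/-- In the Green ring `R = ℤ[x,y]/J`: for `0 ≤ e ≤ d-1`,
`f_{e+1} · f_d ≡ (Σ_{i=0}^{e} x^i) · f_d (mod J)`. -/
theorem stmt14 (n d : ℕ) (hn : 1 ≤ n) (hd : 1 ≤ d)
    (J : Ideal (MvPolynomial (Fin 2) ℤ))
    (hJ : J = Ideal.span {X 0 ^ n - 1, (X 1 - X 0 - 1) * genFib d})
    (e : ℕ) (he : e + 1 ≤ d) :
    Ideal.Quotient.mk J (genFib (e + 1) * genFib d) =
      Ideal.Quotient.mk J ((∑ i ∈ Finset.range (e + 1), X 0 ^ i) * genFib d) := by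
  rw [Ideal.Quotient.eq, ← sub_mul]
  obtain ⟨a, ha⟩ := (genFib_dvd (e + 1)).1
  rw [ha, hJ, mul_right_comm]
  exact Ideal.mul_mem_right _ _ (Ideal.subset_span (by simp))
end
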